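/- arXiv:1105.1865 — 2 statements merged into one kernel-verified Lean document; each statement's English description precedes it below -/
import Mathlib

section
/- With $f$, $t_+$, $t_-$ as in the context: $\tfrac{1}{2}\Big(\tfrac{1}{t_+(x)} - \tfrac{1}{t_-(x)}\Big) = \tfrac{1}{2\sqrt{x}} + O(\sqrt{x})$ as $x \to 0^+$. (This quantity is the value $F((0,x),(1,0))$ of the Hilbert metric in the horizontal direction.) -/
open Filter Topology Asymptotics

lemma aux_taylor (f : ℝ → ℝ)
    (hf : ContDiffAt ℝ 4 f 0)
    (hf0 : f 0 = 0) (hf1 : deriv f 0 = 0) (hf2 : deriv (deriv f) 0 = 1/2) :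
    ∃ a C : ℝ, 0 ≤ C ∧ ∀ᶠ t in 𝓝 (0:ℝ), |f t - t^2/4 - a * t^3| ≤ C * t^4 := by
  obtain ⟨ε, hε, hb⟩ := Metric.eventually_nhds_iff_ball.1 (hf.eventually (by simp))
  have hon : ContDiffOn ℝ (4:ℕ) f (Metric.ball 0 ε) :=
    fun y hy => (hb y hy).contDiffWithinAt
  have h0 : (0:ℝ) ∈ Metric.ball (0:ℝ) ε := Metric.mem_ball_self hε
  have h := taylor_isLittleO (convex_ball 0 ε) h0 hon
  rw [nhdsWithin_eq_nhds.2 (Metric.ball_mem_nhds 0 hε)] at h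
  have e : ∀ n, iteratedDerivWithin n f (Metric.ball 0 ε) 0 = deriv^[n] f 0 :=
    fun n => iteratedDerivWithin_of_isOpen_eq_iterate Metric.isOpen_ball h0
  have e1 : deriv^[1] f 0 = 0 := hf1
  have e2 : deriv^[2] f 0 = 1/2 := hf2
  refine ⟨deriv^[3] f 0 / 6, 1 + |deriv^[4] f 0 / 24|, by positivity, ?_⟩
  filter_upwards [h.bound one_pos] with t ht
  simp only [taylor_within_apply, Finset.sum_range_succ, e, e1, e2, Finset.sum_range_zero,
    Real.norm_eq_abs, sub_zero, smul_eq_mul, Nat.factorial, Function.iterate_zero, id, hf0] at ht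
  rw [abs_of_nonneg (by positivity : (0:ℝ) ≤ t^4)] at ht
  generalize deriv^[3] f 0 = A at *
  generalize deriv^[4] f 0 = B at *
  have h4 : (0:ℝ) ≤ t^4 := by positivity
  calc |f t - t^2/4 - A/6 * t^3| 
      = |(f t - t^2/4 - A/6 * t^3 - B/24 * t^4) + B/24 * t^4| := by ring_nf
    _ ≤ |f t - t^2/4 - A/6 * t^3 - B/24 * t^4| + |B/24 * t^4| := abs_add_le _ _
    _ ≤ t^4 + |B/24| * t^4 := by
        rw [abs_mul, abs_of_nonneg h4]
        gcongr
        rw [one_mul] at ht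
        refine le_trans (le_of_eq ?_) ht
        congr 1
        push_cast
        ring
    _ = _ := by ring

lemma aux_core (a C s t : ℝ) (hC : 0 ≤ C) (hs : 0 < s) (ht : 0 < t) (ht1 : t ≤ 1)
    (hat : |a| * t ≤ 1/4) (hKt : (4 * (C + a^2)) * t ≤ 1/8)
    (h : |s^2 - t^2/4 - a * t^3| ≤ C * t^4) :
    |s / t - 1/2 - a * t| ≤ (4 * (C + a^2)) * t^2 ∧ t ≤ 8 * s ∧
      |s - t/2| ≤ (|a| + 4 * (C + a^2)) * t^2 := by
  obtain ⟨r, rfl⟩ : ∃ r, s = r * t := ⟨s / t, by field_simp⟩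
  have hr : 0 < r := by
    by_contra hr
    nlinarith
  rw [mul_div_cancel_right₀ _ ht.ne']
  have h1 : |r^2 - 1/4 - a * t| ≤ C * t^2 := by
    have e : (r*t)^2 - t^2/4 - a * t^3 = (r^2 - 1/4 - a * t) * t^2 := by ring
    rw [e, abs_mul, abs_of_pos (by positivity : 0 < t^2)] at h
    have : 0 < t^2 := by positivity
    refine le_of_mul_le_mul_right ?_ this
    calc _ ≤ _ := h
      _ = _ := by ring
  have hat' : |a * t| ≤ 1/4 := by rwa [abs_mul, abs_of_pos ht]
  have hb := abs_le.1 hat'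
  have h2 : |r - 1/2 - a * t| ≤ (4 * (C + a^2)) * t^2 := by
    have e : (r - 1/2 - a*t) * (r + 1/2 + a*t) = (r^2 - 1/4 - a*t) - a^2*t^2 := by ring
    have h3 : |r - 1/2 - a*t| * (1/4) ≤ C * t^2 + a^2 * t^2 := by
      calc _ ≤ |r - 1/2 - a*t| * (r + 1/2 + a*t) := by gcongr; linarith
        _ = |(r - 1/2 - a*t) * (r + 1/2 + a*t)| := by
            rw [abs_mul, abs_of_pos (by linarith : 0 < r + 1/2 + a*t)]
        _ = |(r^2 - 1/4 - a*t) - a^2*t^2| := by rw [e]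
        _ ≤ |r^2 - 1/4 - a*t| + |a^2*t^2| := abs_sub _ _
        _ ≤ _ := by rw [abs_of_nonneg (by positivity : 0 ≤ a^2*t^2)]; gcongr
    linarith
  have hK : 0 ≤ 4 * (C + a^2) := by positivity
  generalize 4 * (C + a^2) = K at *
  refine ⟨h2, ?_, ?_⟩
  · have h4 : K * t^2 ≤ 1/8 := by nlinarith
    have := abs_le.1 h2
    have : 1/8 ≤ r := by linarith
    nlinarith
  · have e : r * t - t/2 = ((r - 1/2 - a*t) + a * t) * t := by ring
    rw [e, abs_mul, abs_of_pos ht]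
    calc _ ≤ (|r - 1/2 - a*t| + |a*t|) * t := by gcongr; exact abs_add_le _ _
      _ ≤ (K * t^2 + |a| * t) * t := by rw [abs_mul a t, abs_of_pos ht]; gcongr
      _ = (K * t + |a|) * t^2 := by ring
      _ ≤ (K * 1 + |a|) * t^2 := by gcongr
      _ = _ := by ring

lemma aux_final (a K s p m : ℝ) (hK : 0 ≤ K) (hs : 0 < s) (hp : 0 < p) (hm : 0 < m)
    (h1 : |s / p - 1/2 - a * p| ≤ K * p^2) (h2 : |s / m - 1/2 + a * m| ≤ K * m^2)
    (hp8 : p ≤ 8 * s) (hm8 : m ≤ 8 * s)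
    (h3 : |s - p/2| ≤ (|a| + K) * p^2) (h4 : |s - m/2| ≤ (|a| + K) * m^2) :
    |1/2 * (1/p + 1/m) - 1/(2*s)| ≤ (64 * K + 128 * |a| * (|a| + K)) * s := by
  have hp2 : p^2 ≤ 64 * s^2 := by nlinarith
  have hm2 : m^2 ≤ 64 * s^2 := by nlinarith
  have hd : |p - m| ≤ 256 * (|a| + K) * s^2 := by
    have e : p - m = 2 * ((s - m/2) - (s - p/2)) := by ring
    have := abs_sub (s - m/2) (s - p/2)
    rw [e, abs_mul, abs_two]
    have i1 : (|a| + K) * p^2 ≤ (|a| + K) * (64 * s^2) := by gcongr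
    have i2 : (|a| + K) * m^2 ≤ (|a| + K) * (64 * s^2) := by gcongr
    linarith
  have hsum : |s/p + s/m - 1| ≤ (128 * K + 256 * |a| * (|a| + K)) * s^2 := by
    have e : s/p + s/m - 1 = ((s / p - 1/2 - a * p) + (s / m - 1/2 + a * m)) + a * (p - m) := by
      ring
    rw [e]
    have j1 := abs_add_le ((s / p - 1/2 - a * p) + (s / m - 1/2 + a * m)) (a * (p - m))
    have j2 := abs_add_le (s / p - 1/2 - a * p) (s / m - 1/2 + a * m)
    rw [abs_mul] at j1
    have j3 : |a| * |p - m| ≤ |a| * (256 * (|a| + K) * s^2) := by gcongr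
    have i1 : K * p^2 ≤ K * (64 * s^2) := by gcongr
    have i2 : K * m^2 ≤ K * (64 * s^2) := by gcongr
    linarith
  have e : 1/2 * (1/p + 1/m) - 1/(2*s) = (s/p + s/m - 1) / (2*s) := by
    field_simp
  rw [e, abs_div, abs_of_pos (by positivity : 0 < 2*s), div_le_iff₀ (by positivity)]
  linarith

theorem stmt_6 (f tp tm : ℝ → ℝ)
    (hf : ContDiffAt ℝ 4 f 0)
    (hf0 : f 0 = 0) (hf1 : deriv f 0 = 0) (hf2 : deriv (deriv f) 0 = 1/2)
    (hfpos : ∀ᶠ t in 𝓝 (0:ℝ), 0 < deriv (deriv f) t)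
    (htp : ∀ᶠ x in 𝓝[>] (0:ℝ), 0 < tp x ∧ f (tp x) = x)
    (htm : ∀ᶠ x in 𝓝[>] (0:ℝ), tm x < 0 ∧ f (tm x) = x)
    (htp0 : Tendsto tp (𝓝[>] (0:ℝ)) (𝓝 0))
    (htm0 : Tendsto tm (𝓝[>] (0:ℝ)) (𝓝 0)) :
    (fun x => 1/2 * (1 / tp x - 1 / tm x) - 1 / (2 * Real.sqrt x))
      =O[𝓝[>] (0:ℝ)] fun x => Real.sqrt x := by
  obtain ⟨a, C, hC, hT⟩ := aux_taylor f hf hf0 hf1 hf2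
  have hsm : ∀ᶠ t in 𝓝 (0:ℝ), |t| ≤ 1 ∧ |a| * |t| ≤ 1/4 ∧ (4 * (C + a^2)) * |t| ≤ 1/8 := by
    have g : ∀ (c d : ℝ), 0 < d → ∀ᶠ t in 𝓝 (0:ℝ), c * |t| ≤ d := by
      intro c d hd
      have : Tendsto (fun t : ℝ => c * |t|) (𝓝 0) (𝓝 (c * |0|)) :=
        (by fun_prop : Continuous fun t : ℝ => c * |t|).tendsto 0
      rw [abs_zero, mul_zero] at this
      exact this.eventually_le_const hd
    filter_upwards [g 1 1 one_pos, g |a| (1/4) (by norm_num),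
      g (4 * (C + a^2)) (1/8) (by norm_num)] with t h1 h2 h3
    exact ⟨by linarith, h2, h3⟩
  refine IsBigO.of_bound (64 * (4 * (C + a^2)) + 128 * |a| * (|a| + 4 * (C + a^2))) ?_
  filter_upwards [htp, htm, htp0.eventually hT, htm0.eventually hT, htp0.eventually hsm,
    htm0.eventually hsm, self_mem_nhdsWithin] with x ⟨hp, hpx⟩ ⟨hm, hmx⟩ hTp hTm
    ⟨p1, p2, p3⟩ ⟨m1, m2, m3⟩ hx
  have hx : 0 < x := hx
  have hs : 0 < Real.sqrt x := Real.sqrt_pos.2 hx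
  have hsq : Real.sqrt x ^ 2 = x := Real.sq_sqrt hx.le
  rw [hpx] at hTp
  rw [hmx] at hTm
  rw [abs_of_pos hp] at p1 p2 p3
  rw [abs_of_neg hm] at m1 m2 m3
  obtain ⟨u1, u2, u3⟩ := aux_core a C (Real.sqrt x) (tp x) hC hs hp p1 p2 p3 (by rwa [hsq])
  obtain ⟨v1, v2, v3⟩ := aux_core (-a) C (Real.sqrt x) (-tm x) hC hs (by linarith) m1
    (by rwa [abs_neg]) (by rwa [neg_sq]) (by
      rw [hsq]
      convert hTm using 1
      · congr 1; ring
      · ring)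
  rw [abs_neg] at v3
  rw [neg_sq a] at v1 v3
  have := aux_final a (4 * (C + a^2)) (Real.sqrt x) (tp x) (-tm x) (by positivity) hs hp
    (by linarith) u1 (by convert v1 using 2; ring) u2 v2 u3 v3
  rw [Real.norm_eq_abs, Real.norm_eq_abs, abs_of_pos hs]
  convert this using 3
  rw [div_neg, sub_eq_add_neg]
end

section
/- With $f$, $t_+$ as in the context: $\dfrac{f''(t_+(x))}{f'(t_+(x))^3} = \dfrac{1}{2 x^{3/2}} + O\big(x^{-1/2}\big)$ as $x \to 0^+$. (Up to sign, this quantity is the second derivative $r_{x_2 x_2}$ of the distance $r$ from $(0,x)$ to the boundary graph in the direction $(1,0)$.) -/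
open Filter Topology Asymptotics

lemma aux_int (p p' : ℝ → ℝ) (n : ℕ) (h0 : p 0 = 0)
    (hd : ∀ᶠ t in 𝓝 (0:ℝ), HasDerivAt p (p' t) t)
    (hO : p' =O[𝓝 (0:ℝ)] fun t => t ^ n) :
    p =O[𝓝 (0:ℝ)] fun t => t ^ (n+1) := by
  obtain ⟨C, hC⟩ := hO.bound
  obtain ⟨δ, hδ, hb⟩ := Metric.eventually_nhds_iff_ball.1 (hd.and hC)
  refine IsBigO.of_bound C ?_
  filter_upwards [Metric.ball_mem_nhds (0:ℝ) hδ] with t ht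
  have hsub : Metric.closedBall (0:ℝ) |t| ⊆ Metric.ball 0 δ := by
    apply Metric.closedBall_subset_ball
    simpa using ht
  have key := (convex_closedBall (0:ℝ) |t|).norm_image_sub_le_of_norm_hasDerivWithin_le
    (f := p) (f' := p') (C := C * |t| ^ n) (x := 0) (y := t)
    (fun y hy => (hb y (hsub hy)).1.hasDerivWithinAt)
    (fun y hy => by
      have h1 := (hb y (hsub hy)).2
      have hy' : |y| ≤ |t| := by simpa using hy
      rw [norm_pow, Real.norm_eq_abs y] at h1
      by_cases hc : 0 ≤ C
      · exact h1.trans (by gcongr)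
      · exfalso
        push Not at hc
        have hδ2 : δ/2 ∈ Metric.ball (0:ℝ) δ := by
          simp [abs_of_pos hδ]; exact hδ
        have h3 := (hb _ hδ2).2
        rw [norm_pow, Real.norm_eq_abs (δ/2)] at h3
        have h4 : 0 < |δ/2| ^ n := by positivity
        have h5 := norm_nonneg (p' (δ/2))
        nlinarith)
    (by simp) (by simp)
  rw [h0, sub_zero, sub_zero] at key
  rw [norm_pow, Real.norm_eq_abs t] at *
  rw [pow_succ, ← mul_assoc]
  exact key

lemma aux_mul (X Y : ℝ → ℝ) (c d : ℝ)
    (hX : (fun t => X t - 1 - c * t) =O[𝓝[>] (0:ℝ)] fun t => t ^ 2)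
    (hY : (fun t => Y t - 1 - d * t) =O[𝓝[>] (0:ℝ)] fun t => t ^ 2) :
    (fun t => X t * Y t - 1 - (c + d) * t) =O[𝓝[>] (0:ℝ)] fun t => t ^ 2 := by
  have hb : ∀ e : ℝ, (fun t : ℝ => 1 + e * t) =O[𝓝[>] (0:ℝ)] fun _ => (1:ℝ) := by
    intro e
    have : Tendsto (fun t : ℝ => 1 + e * t) (𝓝[>] (0:ℝ)) (𝓝 (1 + e * 0)) :=
      (Continuous.tendsto (by fun_prop) 0).mono_left nhdsWithin_le_nhds
    exact this.isBigO_one ℝ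
  have h2 : (fun t : ℝ => t ^ 2) =O[𝓝[>] (0:ℝ)] fun _ => (1:ℝ) := by
    have : Tendsto (fun t : ℝ => t ^ 2) (𝓝[>] (0:ℝ)) (𝓝 (0 ^ 2)) :=
      (Continuous.tendsto (by fun_prop) 0).mono_left nhdsWithin_le_nhds
    exact this.isBigO_one ℝ
  have hY1 : Y =O[𝓝[>] (0:ℝ)] fun _ => (1:ℝ) :=
    ((hY.trans h2).add (hb d)).congr_left (fun t => by ring)
  have e1 := hX.mul hY1
  have e2 := (hb c).mul hY
  have e3 := (isBigO_refl (fun t : ℝ => t ^ 2) (𝓝[>] (0:ℝ))).const_mul_left (c * d)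
  simp only [mul_one, one_mul] at e1 e2
  exact ((e1.add e2).add e3).congr_left (fun t => by ring)

lemma aux_scale (p : ℝ → ℝ) (c k : ℝ) (n : ℕ)
    (h : p =O[𝓝 (0:ℝ)] fun t => t ^ (n+2)) (q : ℝ → ℝ)
    (hq : ∀ t, 0 < t → q t = c / t ^ n * p t) :
    q =O[𝓝[>] (0:ℝ)] fun t => t ^ 2 := by
  have h1 := ((isBigO_refl (fun t : ℝ => 1 / t ^ n) (𝓝[>] (0:ℝ))).mul
    (h.mono nhdsWithin_le_nhds)).const_mul_left c
  refine h1.congr' ?_ ?_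
  · filter_upwards [self_mem_nhdsWithin] with t ht
    rw [hq t ht]; ring
  · filter_upwards [self_mem_nhdsWithin] with t ht
    have : t ≠ 0 := ne_of_gt ht
    field_simp
    ring

theorem stmt_9 (f tp tm : ℝ → ℝ)
    (hf : ContDiffAt ℝ 4 f 0)
    (hf0 : f 0 = 0) (hf1 : deriv f 0 = 0) (hf2 : deriv (deriv f) 0 = 1/2)
    (hfpos : ∀ᶠ t in 𝓝 (0:ℝ), 0 < deriv (deriv f) t)
    (htp : ∀ᶠ x in 𝓝[>] (0:ℝ), 0 < tp x ∧ f (tp x) = x)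
    (htm : ∀ᶠ x in 𝓝[>] (0:ℝ), tm x < 0 ∧ f (tm x) = x)
    (htp0 : Tendsto tp (𝓝[>] (0:ℝ)) (𝓝 0))
    (htm0 : Tendsto tm (𝓝[>] (0:ℝ)) (𝓝 0)) :
    (fun x => deriv (deriv f) (tp x) / (deriv f (tp x)) ^ 3 - 1 / (2 * x ^ (3/2 : ℝ)))
      =O[𝓝[>] (0:ℝ)] fun x => x ^ (-(1/2) : ℝ) := by
  have c1 : ContDiffAt ℝ 3 (deriv f) 0 := hf.derivWithin (by norm_num)
  have c2 : ContDiffAt ℝ 2 (deriv (deriv f)) 0 := c1.derivWithin (by norm_num)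
  have c3 : ContDiffAt ℝ 1 (deriv (deriv (deriv f))) 0 := c2.derivWithin (by norm_num)
  have dd : ∀ (g : ℝ → ℝ) (n : ℕ), n ≠ 0 → ContDiffAt ℝ n g 0 →
      ∀ᶠ t in 𝓝 (0:ℝ), HasDerivAt g (deriv g t) t := by
    intro g n hn hg
    filter_upwards [hg.eventually (by simp)] with t ht
    exact (ht.differentiableAt (by exact_mod_cast hn)).hasDerivAt
  have d0 := dd f 4 (by norm_num) hf
  have d1 := dd _ 3 (by norm_num) c1
  have d2 := dd _ 2 (by norm_num) c2
  set a := deriv (deriv (deriv f)) 0 / 6 with ha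
  have b3 : (fun t => deriv (deriv (deriv f)) t - 6 * a) =O[𝓝 (0:ℝ)] fun t => t ^ 1 := by
    have := (c3.differentiableAt (by norm_num)).isBigO_sub
    refine this.congr (fun t => by rw [ha]; ring) (fun t => by ring)
  have b2 : (fun t => deriv (deriv f) t - 1/2 - 6 * a * t) =O[𝓝 (0:ℝ)] fun t => t ^ 2 := by
    refine aux_int _ _ 1 (by simp [hf2]) ?_ b3
    filter_upwards [d2] with t ht
    exact ((ht.sub_const (1/2)).sub ((hasDerivAt_id t).const_mul (6*a))).congr_deriv (by simp; try ring)
  have b1 : (fun t => deriv f t - t/2 - 3 * a * t^2) =O[𝓝 (0:ℝ)] fun t => t ^ 3 := by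
    refine aux_int _ _ 2 (by simp [hf1]) ?_ b2
    filter_upwards [d1] with t ht
    exact ((ht.sub ((hasDerivAt_id t).div_const 2)).sub
      ((hasDerivAt_pow 2 t).const_mul (3*a))).congr_deriv (by simp; try ring)
  have b0 : (fun t => f t - t^2/4 - a * t^3) =O[𝓝 (0:ℝ)] fun t => t ^ 4 := by
    refine aux_int _ _ 3 (by simp [hf0]) ?_ b1
    filter_upwards [d0] with t ht
    exact ((ht.sub ((hasDerivAt_pow 2 t).div_const 4)).sub
      ((hasDerivAt_pow 3 t).const_mul a)).congr_deriv (by simp; try ring)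
  have hF := aux_scale _ 4 0 2 b0 (fun t => (4 * f t / t^2) - 1 - 4 * a * t)
    (fun t ht => by field_simp)
  have hG := aux_scale _ 2 0 1 b1 (fun t => (2 * deriv f t / t) - 1 - 6 * a * t)
    (fun t ht => by field_simp; ring)
  have hH := aux_scale _ 2 0 0 b2 (fun t => (2 * deriv (deriv f) t) - 1 - 12 * a * t)
    (fun t ht => by field_simp; ring)
  have hL := aux_mul _ _ _ _ (aux_mul _ _ _ _ hH hH) (aux_mul _ _ _ _ hF (aux_mul _ _ _ _ hF hF))
  have hG3 := aux_mul _ _ _ _ hG (aux_mul _ _ _ _ hG hG)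
  have hR := aux_mul _ _ _ _ hG3 hG3
  have hD : (fun t => (2 * deriv (deriv f) t)^2 * (4 * f t / t^2)^3 - (2 * deriv f t / t)^6)
      =O[𝓝[>] (0:ℝ)] fun t => t ^ 2 :=
    (hL.sub hR).congr_left (fun t => by ring)
  have lim : ∀ (X : ℝ → ℝ) (c : ℝ),
      (fun t => X t - 1 - c * t) =O[𝓝[>] (0:ℝ)] (fun t => t ^ 2) →
      Tendsto X (𝓝[>] (0:ℝ)) (𝓝 1) := by
    intro X c hX
    have h2 : Tendsto (fun t : ℝ => t ^ 2) (𝓝[>] (0:ℝ)) (𝓝 0) := by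
      have : Tendsto (fun t : ℝ => t ^ 2) (𝓝[>] (0:ℝ)) (𝓝 (0 ^ 2)) :=
        (Continuous.tendsto (by fun_prop) 0).mono_left nhdsWithin_le_nhds
      simpa using this
    have h3 : Tendsto (fun t : ℝ => 1 + c * t) (𝓝[>] (0:ℝ)) (𝓝 (1 + c * 0)) :=
      (Continuous.tendsto (by fun_prop) 0).mono_left nhdsWithin_le_nhds
    have := (hX.trans_tendsto h2).add h3
    simp only [mul_zero, add_zero, zero_add] at this
    exact this.congr (fun t => by ring)
  have eF := (lim _ _ hF).eventually (lt_mem_nhds (show (1/2:ℝ) < 1 by norm_num))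
  have eG := (lim _ _ hG).eventually (lt_mem_nhds (show (1/2:ℝ) < 1 by norm_num))
  have eH := (lim _ _ hH).eventually (lt_mem_nhds (show (1/2:ℝ) < 1 by norm_num))
  obtain ⟨C, hC0, hC⟩ := hD.exists_pos
  have htp' : Tendsto tp (𝓝[>] (0:ℝ)) (𝓝[>] (0:ℝ)) :=
    tendsto_nhdsWithin_iff.2 ⟨htp0, htp.mono fun x hx => hx.1⟩
  refine IsBigO.of_bound (C * 2^6 * 8 / 2) ?_
  filter_upwards [htp, self_mem_nhdsWithin, htp'.eventually (eF.and (eG.and (eH.and hC.bound)))]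
    with x hx hx0 hh
  obtain ⟨hF', hG', hH', hC'⟩ := hh
  obtain ⟨ht, hfx⟩ := hx
  rw [hfx] at hF' hC'
  have hx0 : 0 < x := hx0
  generalize tp x = t at *
  generalize hA : deriv (deriv f) t = A at *
  generalize hB : deriv f t = B at *
  obtain ⟨s, hs, rfl⟩ : ∃ s : ℝ, 0 < s ∧ x = s ^ 2 :=
    ⟨√x, Real.sqrt_pos.2 hx0, (Real.sq_sqrt hx0.le).symm⟩
  have r1 : (s^2) ^ (3/2 : ℝ) = s^3 := by
    rw [← Real.rpow_natCast s 2, ← Real.rpow_mul hs.le, ← Real.rpow_natCast s 3]; norm_num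
  have r2 : (s^2) ^ (-(1/2) : ℝ) = 1 / s := by
    rw [← Real.rpow_natCast s 2, ← Real.rpow_mul hs.le]
    norm_num [Real.rpow_neg_one]
  rw [r1, r2]
  have hts : t ^ 2 ≤ 8 * s ^ 2 := by
    rw [lt_div_iff₀ (by positivity)] at hF'
    nlinarith
  obtain ⟨G, rfl⟩ : ∃ G, B = t * G / 2 := ⟨2 * B / t, by field_simp⟩
  have eGG : 2 * (t * G / 2) / t = G := by field_simp
  rw [eGG] at hG' hC'
  have hA0 : 0 < A := by linarith
  have hGp : 0 < G := by linarith
  set Z := A / (t * G / 2)^3 with hZ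
  have hZ0 : 0 < Z := by positivity
  have n1 : (2 * A) ^ 2 * (4 * s^2 / t^2)^3 - G^6 = (4 * Z^2 * s^6 - 1) * G^6 := by
    rw [hZ]; field_simp; ring
  have hG6 : 1 ≤ 2^6 * G^6 := by
    have : (1:ℝ)^6 ≤ (2*G)^6 := by gcongr; linarith
    rw [mul_pow] at this; linarith
  rw [n1, norm_mul, Real.norm_of_nonneg (by positivity : 0 ≤ G^6),
    Real.norm_of_nonneg (by positivity : 0 ≤ t^2)] at hC'
  have n2 : ‖4 * Z^2 * s^6 - 1‖ ≤ C * 2^6 * 8 * s^2 := by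
    have := norm_nonneg (4 * Z^2 * s^6 - 1)
    calc ‖4 * Z^2 * s^6 - 1‖ ≤ ‖4 * Z^2 * s^6 - 1‖ * (2^6 * G^6) :=
          le_mul_of_one_le_right this hG6
      _ = 2^6 * (‖4 * Z^2 * s^6 - 1‖ * G^6) := by ring
      _ ≤ 2^6 * (C * t^2) := by gcongr
      _ ≤ 2^6 * (C * (8 * s^2)) := by gcongr
      _ = _ := by ring
  have n3 : Z - 1 / (2 * s^3) = (4 * Z^2 * s^6 - 1) / (2 * s^3 * (2 * Z * s^3 + 1)) := by
    field_simp; ring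
  rw [n3, norm_div, Real.norm_of_nonneg (by positivity : 0 ≤ 2 * s^3 * (2 * Z * s^3 + 1)),
    Real.norm_of_nonneg (by positivity : 0 ≤ 1 / s)]
  calc _ ≤ (C * 2^6 * 8 * s^2) / (2 * s^3 * 1) := by
        gcongr
        have : 0 < Z * s^3 := by positivity
        linarith
    _ = _ := by field_simp
end
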